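/- For every integer d ≥ 1 and every real x > d, the skeleton strategy bi-balancing the depth-d complete binary tree with value function (f_d(x), x) is unique: if two skeleton strategies {r_t}_{t=1}^d and {r'_t}_{t=1}^d both bi-balance the depth-d tree with the same value function (f_d(x), x), then r_t(q^{t-1}) = r'_t(q^{t-1}) for all t = 1,…,d and all q^{t-1} ∈ {0,1}^{t-1}. -/

import Mathlib

/-!
Splitting a depth-`(d+1)` tree at its root, whose probability of the bit `1` is `ρ`, shows that a
strategy bi-balances it with value `(a, b)` only if its two subtrees are bi-balanced with values
`(a - 1/(1-ρ), b)` and `(a, b - 1/ρ)` (`biBalances_branch_false`, `biBalances_branch_true`).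

By induction on the depth, the second component `b` determines the strategy, and the first
component `a` is a non-increasing function of `b` (`biBalances_rigidity`). For monotonicity,
suppose `b ≤ b'` but `a < a'`. The right subtrees force `b - 1/ρ > b' - 1/ρ'`, hence `ρ > ρ'`,
while the left subtrees force `a - 1/(1-ρ) ≥ a' - 1/(1-ρ')`, hence `ρ < ρ'`, a contradiction. For
uniqueness, if `b = b'` then also `a = a'`; the left subtrees then have the same value, so `ρ = ρ'`,
and the subtrees on both sides agree by induction.
-/

/-- `f_d(x) = d·(x−(d−1))/(x−d)`. -/
noncomputable def fd (d : ℕ) (x : ℝ) : ℝ := d * (x - ((d : ℝ) - 1)) / (x - d)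

/-- `V^0(q^d) = Σ_t (1−q_t)/(1−r_t(q^{t-1}))` for a decisive sequence `q^d ∈ {0,1}^d`. -/
noncomputable def V0 (d : ℕ) (r : (t : Fin d) → (Fin t → Bool) → ℝ)
    (q : Fin d → Bool) : ℝ :=
  ∑ t : Fin d, (1 - if q t then (1:ℝ) else 0) /
    (1 - r t (fun i => q (Fin.castLE t.2.le i)))

/-- `V^1(q^d) = Σ_t q_t/r_t(q^{t-1})` for a decisive sequence `q^d ∈ {0,1}^d`. -/
noncomputable def V1 (d : ℕ) (r : (t : Fin d) → (Fin t → Bool) → ℝ)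
    (q : Fin d → Bool) : ℝ :=
  ∑ t : Fin d, (if q t then (1:ℝ) else 0) / r t (fun i => q (Fin.castLE t.2.le i))

/-- The last bit `q_d` of `q^d`. -/
def lastBit (d : ℕ) (q : Fin d → Bool) : Bool :=
  if h : 0 < d then q ⟨d - 1, by omega⟩ else false

/-- `{r_t}` bi-balances the depth-`d` complete binary tree with value function
`(v0, v1)`. -/
def biBalances (d : ℕ) (r : (t : Fin d) → (Fin t → Bool) → ℝ) (v0 v1 : ℝ) : Prop :=
  (∀ q : Fin d → Bool, lastBit d q = false → V0 d r q = v0) ∧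
  (∀ q : Fin d → Bool, lastBit d q = true → V1 d r q = v1)

/-- The strategy induced by `r` on the subtree reached from the root through the bit `b`. -/
def branch {d : ℕ} (r : (t : Fin (d + 1)) → (Fin t → Bool) → ℝ) (b : Bool) :
    (t : Fin d) → (Fin t → Bool) → ℝ :=
  fun t qs => r t.succ (Fin.cons b qs : Fin (t + 1) → Bool)

/-- The value of the strategy at the root, i.e. at the empty bit sequence. -/
def rootVal {d : ℕ} (r : (t : Fin (d + 1)) → (Fin t → Bool) → ℝ) : ℝ :=
  r 0 (fun i => i.elim0)

lemma restrict_cons {d : ℕ} (b : Bool) (q : Fin d → Bool) (t : Fin d) :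
    (fun i : Fin (t.succ : ℕ) => (Fin.cons b q : Fin (d + 1) → Bool) (Fin.castLE t.succ.2.le i))
      = (Fin.cons b (fun i : Fin t => q (Fin.castLE t.2.le i)) : Fin (t + 1) → Bool) := by
  funext i
  refine Fin.cases (n := t) ?_ (fun j => ?_) i
  · rfl
  · rfl

lemma V0_cons {d : ℕ} (r : (t : Fin (d + 1)) → (Fin t → Bool) → ℝ) (b : Bool)
    (q : Fin d → Bool) :
    V0 (d + 1) r (Fin.cons b q) =
      (1 - if b then (1 : ℝ) else 0) / (1 - rootVal r) + V0 d (branch r b) q := by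
  unfold V0
  rw [Fin.sum_univ_succ]
  congr 1
  · rw [Fin.cons_zero, rootVal]
    congr 3
    exact funext fun i => i.elim0
  · refine Finset.sum_congr rfl fun t _ => ?_
    rw [restrict_cons, Fin.cons_succ, branch]

lemma V1_cons {d : ℕ} (r : (t : Fin (d + 1)) → (Fin t → Bool) → ℝ) (b : Bool)
    (q : Fin d → Bool) :
    V1 (d + 1) r (Fin.cons b q) =
      (if b then (1 : ℝ) else 0) / rootVal r + V1 d (branch r b) q := by
  unfold V1
  rw [Fin.sum_univ_succ]
  congr 1
  · rw [Fin.cons_zero, rootVal]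
    congr 2
    exact funext fun i => i.elim0
  · refine Finset.sum_congr rfl fun t _ => ?_
    rw [restrict_cons, Fin.cons_succ, branch]

/-- The subtree must be nonempty: for depth `0`, `lastBit` is `false` by convention. -/
lemma lastBit_cons {d : ℕ} (b : Bool) (q : Fin (d + 1) → Bool) :
    lastBit (d + 2) (Fin.cons b q) = lastBit (d + 1) q := by
  simp only [lastBit, Nat.zero_lt_succ, dif_pos]
  rfl

lemma biBalances_branch_false {d : ℕ} {r : (t : Fin (d + 2)) → (Fin t → Bool) → ℝ} {a b : ℝ}
    (h : biBalances (d + 2) r a b) :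
    biBalances (d + 1) (branch r false) (a - 1 / (1 - rootVal r)) b := by
  refine ⟨fun q hq => ?_, fun q hq => ?_⟩
  · have := h.1 (Fin.cons false q) (by rw [lastBit_cons, hq])
    rw [V0_cons] at this
    simp at this ⊢
    linarith
  · have := h.2 (Fin.cons false q) (by rw [lastBit_cons, hq])
    rw [V1_cons] at this
    simpa using this

lemma biBalances_branch_true {d : ℕ} {r : (t : Fin (d + 2)) → (Fin t → Bool) → ℝ} {a b : ℝ}
    (h : biBalances (d + 2) r a b) :
    biBalances (d + 1) (branch r true) a (b - 1 / rootVal r) := by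
  refine ⟨fun q hq => ?_, fun q hq => ?_⟩
  · have := h.1 (Fin.cons true q) (by rw [lastBit_cons, hq])
    rw [V0_cons] at this
    simpa using this
  · have := h.2 (Fin.cons true q) (by rw [lastBit_cons, hq])
    rw [V1_cons] at this
    simp at this ⊢
    linarith

lemma biBalances_one {r : (t : Fin 1) → (Fin t → Bool) → ℝ} {a b : ℝ}
    (h : biBalances 1 r a b) : a = 1 / (1 - rootVal r) ∧ b = 1 / rootVal r := by
  have h0 := h.1 (Fin.cons false Fin.elim0) rfl
  have h1 := h.2 (Fin.cons true Fin.elim0) rfl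
  rw [V0_cons] at h0
  rw [V1_cons] at h1
  simp [V0, V1] at h0 h1 ⊢
  exact ⟨h0.symm, h1.symm⟩

/-- A strategy is determined by its root value and its two branches. -/
lemma strategy_ext {d : ℕ} {r r' : (t : Fin (d + 1)) → (Fin t → Bool) → ℝ}
    (h0 : rootVal r = rootVal r') (hb : ∀ b, branch r b = branch r' b) : r = r' := by
  funext t
  refine Fin.cases ?_ (fun t => ?_) t
  · funext qs
    have : qs = fun i => i.elim0 := funext fun i => i.elim0
    rw [this]
    exact h0
  · funext qs
    have := congrFun (congrFun (hb (qs (0 : Fin (t + 1)))) t) (Fin.tail (n := t) qs)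
    simp only [branch] at this
    have e : (Fin.cons (qs (0 : Fin (t + 1))) (Fin.tail (n := t) qs) : Fin (t + 1) → Bool) = qs :=
      Fin.cons_self_tail (n := t) qs
    rwa [e] at this

/-- For a bi-balanced tree of fixed depth, the first value is a non-increasing function of the
second one, and the second one determines the strategy. Monotonicity is what carries the
induction for uniqueness. -/
lemma biBalances_rigidity (d : ℕ) :
    ∀ (r r' : (t : Fin (d + 1)) → (Fin t → Bool) → ℝ) (a b a' b' : ℝ),
      (∀ t qs, r t qs ∈ Set.Ioo (0 : ℝ) 1) → (∀ t qs, r' t qs ∈ Set.Ioo (0 : ℝ) 1) →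
      biBalances (d + 1) r a b → biBalances (d + 1) r' a' b' →
      (b ≤ b' → a' ≤ a) ∧ (b = b' → r = r') := by
  induction d with
  | zero =>
    intro r r' a b a' b' hr hr' h h'
    obtain ⟨rfl, rfl⟩ := biBalances_one h
    obtain ⟨rfl, rfl⟩ := biBalances_one h'
    have hρ : rootVal r ∈ Set.Ioo (0 : ℝ) 1 := hr _ _
    have hρ' : rootVal r' ∈ Set.Ioo (0 : ℝ) 1 := hr' _ _
    refine ⟨fun hle => ?_, fun heq => ?_⟩
    · have := (one_div_le_one_div hρ.1 hρ'.1).1 hle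
      exact one_div_le_one_div_of_le (by linarith [hρ.2]) (by linarith)
    · refine strategy_ext ?_ (fun _ => funext fun t => t.elim0)
      simpa using heq
  | succ d ih =>
    -- Monotonicity first, for arbitrary strategies, since uniqueness uses it both ways round.
    have mono : ∀ (r r' : (t : Fin (d + 2)) → (Fin t → Bool) → ℝ) (a b a' b' : ℝ),
        (∀ t qs, r t qs ∈ Set.Ioo (0 : ℝ) 1) → (∀ t qs, r' t qs ∈ Set.Ioo (0 : ℝ) 1) →
        biBalances (d + 2) r a b → biBalances (d + 2) r' a' b' → b ≤ b' → a' ≤ a := by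
      intro r r' a b a' b' hr hr' h h' hle
      have hρ : rootVal r ∈ Set.Ioo (0 : ℝ) 1 := hr _ _
      have hρ' : rootVal r' ∈ Set.Ioo (0 : ℝ) 1 := hr' _ _
      have left := (ih _ _ _ _ _ _ (fun t qs => hr _ _) (fun t qs => hr' _ _)
        (biBalances_branch_false h) (biBalances_branch_false h')).1 hle
      have right := (ih _ _ _ _ _ _ (fun t qs => hr _ _) (fun t qs => hr' _ _)
        (biBalances_branch_true h) (biBalances_branch_true h')).1
      by_contra! hlt
      have h1 : b' - 1 / rootVal r' < b - 1 / rootVal r := by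
        by_contra! hc
        exact absurd (right hc) (not_le.2 hlt)
      have h2 := (one_div_lt_one_div hρ.1 hρ'.1).1 (by linarith)
      have h3 := (one_div_lt_one_div (by linarith [hρ.2] : 0 < 1 - rootVal r)
        (by linarith [hρ'.2] : 0 < 1 - rootVal r')).1 (by linarith)
      linarith
    intro r r' a b a' b' hr hr' h h'
    refine ⟨mono r r' a b a' b' hr hr' h h', ?_⟩
    rintro rfl
    obtain rfl : a = a' := le_antisymm (mono _ _ _ _ _ _ hr' hr h' h le_rfl)
      (mono _ _ _ _ _ _ hr hr' h h' le_rfl)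
    have left := fun hle => (ih _ _ _ _ _ _ (fun t qs => hr _ _) (fun t qs => hr' _ _)
      (biBalances_branch_false h) (biBalances_branch_false h')).1 hle
    have left' := fun hle => (ih _ _ _ _ _ _ (fun t qs => hr' _ _) (fun t qs => hr _ _)
      (biBalances_branch_false h') (biBalances_branch_false h)).1 hle
    have hroot : rootVal r = rootVal r' := by
      have e : 1 / (1 - rootVal r) = 1 / (1 - rootVal r') := by
        linarith [left le_rfl, left' le_rfl]
      rw [one_div, one_div, inv_inj] at e
      linarith
    refine strategy_ext hroot fun c => ?_
    cases c with
    | false => exact (ih _ _ _ _ _ _ (fun t qs => hr _ _) (fun t qs => hr' _ _)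
        (biBalances_branch_false h) (biBalances_branch_false h')).2 rfl
    | true => exact (ih _ _ _ _ _ _ (fun t qs => hr _ _) (fun t qs => hr' _ _)
        (biBalances_branch_true h) (biBalances_branch_true h')).2 (by rw [hroot])

/-- For `d ≥ 1` and `x > d`, the skeleton strategy bi-balancing the depth-`d`
complete binary tree with value function `(f_d(x), x)` is unique. -/
theorem bibalancing_strategy_unique (d : ℕ) (hd : 1 ≤ d) (x : ℝ) (hx : (d : ℝ) < x)
    (r r' : (t : Fin d) → (Fin t → Bool) → ℝ)
    (hr : ∀ (t : Fin d) (qs : Fin t → Bool), r t qs ∈ Set.Ioo (0:ℝ) 1)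
    (hr' : ∀ (t : Fin d) (qs : Fin t → Bool), r' t qs ∈ Set.Ioo (0:ℝ) 1)
    (hb : biBalances d r (fd d x) x) (hb' : biBalances d r' (fd d x) x) :
    ∀ (t : Fin d) (qs : Fin t → Bool), r t qs = r' t qs := by
  obtain ⟨n, rfl⟩ : ∃ n, d = n + 1 := ⟨d - 1, by omega⟩
  have h := (biBalances_rigidity n r r' _ _ _ _ hr hr' hb hb').2 rfl
  intro t qs
  rw [h]
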